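/- Let (X,μ) and (Y,ν) be standard Borel spaces equipped with σ-finite Borel measures, and let σ be a complex measure on the product σ-algebra of Y × X which is an Arveson measure with constant c. Then for all f ∈ L²(X,μ) and g ∈ L²(Y,ν) the function (y,x) ↦ f(x)·conj(g(y)) is |σ|-integrable with ∫_{Y×X} |f(x)|·|g(y)| d|σ|(y,x) ≤ c·‖f‖₂·‖g‖₂, and there exists a unique bounded linear operator T_σ : L²(X,μ) → L²(Y,ν) such that ⟨T_σ f, g⟩ = ∫_{Y×X} f(x)·conj(g(y)) dσ(y,x) for all f ∈ L²(X,μ), g ∈ L²(Y,ν); moreover ‖T_σ‖ ≤ c. -/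

import Mathlib

/-!
The marginal bounds say that the images of `τ` under the two coordinate projections are dominated
by `c • μ` and `c • ν`. Hence composing with a projection and multiplying by a function of modulus
one is a bounded operator `weightedPullback` into `L²(τ)`, of norm at most `√c`. Writing
`P f = w · (f ∘ snd)` and `Q g = g ∘ fst`, the prescribed form is `⟨g, f⟩ ↦ ⟨Q g, P f⟩`, so it is
represented by `T = Q† P`, whose norm is at most `√c · √c = c`. The estimate on
`∫ |f(x)| |g(y)| d|σ|` is the Cauchy–Schwarz inequality in `L²(τ)`. Uniqueness holds because the
inner products with all `g` determine an element of `L²(ν)`.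
-/

open MeasureTheory

section WeightedPullback

variable {Z X : Type*} [MeasurableSpace Z] [MeasurableSpace X]

/-- The change of variables formula turns domination of the image measure into an `L²` bound. -/
lemma eLpNorm_comp_le {τ : Measure Z} {μ : Measure X} {π : Z → X} {c : ℝ} (hc : 0 < c)
    (hπ : Measurable π) (hle : τ.map π ≤ ENNReal.ofReal c • μ)
    {f : X → ℂ} (hf : AEStronglyMeasurable f μ) :
    eLpNorm (f ∘ π) 2 τ ≤ ENNReal.ofReal (√c) * eLpNorm f 2 μ := by
  have hf' : AEStronglyMeasurable f (τ.map π) :=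
    hf.mono_ac ((Measure.absolutelyContinuous_of_le hle).trans Measure.smul_absolutelyContinuous)
  rw [← eLpNorm_map_measure hf' hπ.aemeasurable]
  refine (eLpNorm_mono_measure f hle).trans ?_
  rw [eLpNorm_smul_measure_of_ne_top (by simp), ENNReal.ofReal_rpow_of_pos hc, smul_eq_mul,
    Real.sqrt_eq_rpow]
  norm_num

lemma memLp_comp {τ : Measure Z} {μ : Measure X} {π : Z → X} {c : ℝ} (hc : 0 < c)
    (hπ : Measurable π) (hle : τ.map π ≤ ENNReal.ofReal c • μ)
    {f : X → ℂ} (hf : MemLp f 2 μ) : MemLp (f ∘ π) 2 τ := by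
  refine ⟨?_, (eLpNorm_comp_le hc hπ hle hf.1).trans_lt (ENNReal.mul_lt_top (by simp) hf.2)⟩
  have hf' : AEStronglyMeasurable f (τ.map π) :=
    hf.1.mono_ac ((Measure.absolutelyContinuous_of_le hle).trans Measure.smul_absolutelyContinuous)
  exact hf'.comp_measurable hπ

lemma eLpNorm_unimodular_mul {τ : Measure Z} {u h : Z → ℂ} (hu1 : ∀ᵐ p ∂τ, ‖u p‖ = 1) :
    eLpNorm (fun p => u p * h p) 2 τ = eLpNorm h 2 τ := by
  refine eLpNorm_congr_norm_ae ?_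
  filter_upwards [hu1] with p hp
  simp [hp]

lemma memLp_weighted {τ : Measure Z} {μ : Measure X} {π : Z → X} {c : ℝ} (hc : 0 < c)
    (hπ : Measurable π) (hle : τ.map π ≤ ENNReal.ofReal c • μ)
    {u : Z → ℂ} (hu : Measurable u) (hu1 : ∀ᵐ p ∂τ, ‖u p‖ = 1)
    {f : X → ℂ} (hf : MemLp f 2 μ) : MemLp (fun p => u p * f (π p)) 2 τ := by
  have h := memLp_comp hc hπ hle hf
  refine ⟨hu.aestronglyMeasurable.mul h.1, ?_⟩
  rw [eLpNorm_unimodular_mul (h := fun p => f (π p)) hu1]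
  exact h.2

lemma norm_toLp_weighted_le {τ : Measure Z} {μ : Measure X} {π : Z → X} {c : ℝ} (hc : 0 < c)
    (hπ : Measurable π) (hle : τ.map π ≤ ENNReal.ofReal c • μ)
    {u : Z → ℂ} (hu : Measurable u) (hu1 : ∀ᵐ p ∂τ, ‖u p‖ = 1) (f : Lp ℂ 2 μ) :
    ‖(memLp_weighted hc hπ hle hu hu1 (Lp.memLp f)).toLp _‖ ≤ √c * ‖f‖ := by
  rw [Lp.norm_toLp, eLpNorm_unimodular_mul (h := fun p => f (π p)) hu1, Lp.norm_def,
    ← ENNReal.toReal_ofReal (Real.sqrt_nonneg c), ← ENNReal.toReal_mul]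
  exact ENNReal.toReal_mono (ENNReal.mul_ne_top (by simp) (Lp.eLpNorm_ne_top f))
    (eLpNorm_comp_le hc hπ hle (Lp.aestronglyMeasurable f))

/-- The bounded operator `f ↦ u · (f ∘ π)` from `L²(μ)` to `L²(τ)`, where `u` has modulus one and
the image of `τ` under `π` is dominated by `c • μ`. -/
noncomputable def weightedPullback {τ : Measure Z} {μ : Measure X} {π : Z → X} {c : ℝ} (hc : 0 < c)
    (hπ : Measurable π) (hle : τ.map π ≤ ENNReal.ofReal c • μ)
    {u : Z → ℂ} (hu : Measurable u) (hu1 : ∀ᵐ p ∂τ, ‖u p‖ = 1) :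
    Lp ℂ 2 μ →L[ℂ] Lp ℂ 2 τ :=
  have hae {s : X → Prop} (h : ∀ᵐ x ∂μ, s x) : ∀ᵐ p ∂τ, s (π p) :=
    ae_of_ae_map hπ.aemeasurable (((Measure.absolutelyContinuous_of_le hle).trans
      Measure.smul_absolutelyContinuous).ae_le h)
  LinearMap.mkContinuous
    { toFun := fun f => (memLp_weighted hc hπ hle hu hu1 (Lp.memLp f)).toLp _
      map_add' := fun f g => by
        rw [← MemLp.toLp_add]
        refine MemLp.toLp_congr _ _ ?_
        filter_upwards [hae (Lp.coeFn_add f g)] with p hp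
        simp only [hp, Pi.add_apply, mul_add]
      map_smul' := fun a f => by
        rw [RingHom.id_apply, ← MemLp.toLp_const_smul]
        refine MemLp.toLp_congr _ _ ?_
        filter_upwards [hae (Lp.coeFn_smul a f)] with p hp
        simp [hp, mul_left_comm] }
    (√c) (fun f => norm_toLp_weighted_le hc hπ hle hu hu1 f)

variable {τ : Measure Z} {μ : Measure X} {π : Z → X} {c : ℝ} (hc : 0 < c)
    (hπ : Measurable π) (hle : τ.map π ≤ ENNReal.ofReal c • μ)
    {u : Z → ℂ} (hu : Measurable u) (hu1 : ∀ᵐ p ∂τ, ‖u p‖ = 1)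

lemma norm_weightedPullback_le : ‖weightedPullback hc hπ hle hu hu1‖ ≤ √c :=
  LinearMap.mkContinuous_norm_le _ (Real.sqrt_nonneg c) (norm_toLp_weighted_le hc hπ hle hu hu1)

lemma coeFn_weightedPullback (f : Lp ℂ 2 μ) :
    weightedPullback hc hπ hle hu hu1 f =ᵐ[τ] fun p => u p * f (π p) :=
  MemLp.coeFn_toLp (memLp_weighted hc hπ hle hu hu1 (Lp.memLp f))

end WeightedPullback

/-- Cauchy–Schwarz, for the moduli of two functions in `L²(τ)`. -/
lemma integral_norm_mul_norm_le {Z : Type*} [MeasurableSpace Z] {τ : Measure Z}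
    (F G : Lp ℂ 2 τ) : ∫ p, ‖F p‖ * ‖G p‖ ∂τ ≤ ‖F‖ * ‖G‖ := by
  have key (H : Lp ℂ 2 τ) : (∫ p, ‖H p‖ ^ (2 : ℝ) ∂τ) ^ (1 / (2 : ℝ)) = ‖H‖ := by
    rw [Lp.norm_def, (Lp.memLp H).eLpNorm_eq_integral_rpow_norm (by simp) (by simp),
      ENNReal.toReal_ofReal (by positivity)]
    simp
  have h := integral_mul_norm_le_Lp_mul_Lq (μ := τ) (f := F) (g := G)
    (p := 2) (q := 2) (by constructor <;> norm_num)
    (by simpa using Lp.memLp F) (by simpa using Lp.memLp G)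
  rwa [key, key] at h

/-- An Arveson measure `σ` on `Y × X` (encoded via its total variation
measure `τ = |σ|` together with a polar density `w` of modulus one, so that
`σ(E) = ∫_E w dτ`) with constant `c` gives rise, for every `f ∈ L²(X,μ)`, `g ∈ L²(Y,ν)`,
to a `|σ|`-integrable function `(y,x) ↦ f(x)·conj(g(y))` satisfying
`∫ |f(x)||g(y)| d|σ| ≤ c‖f‖₂‖g‖₂`, and there is a unique bounded operator
`T_σ : L²(X,μ) → L²(Y,ν)` with `⟨T_σ f, g⟩ = ∫ f(x) conj(g(y)) dσ(y,x)`; moreover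
`‖T_σ‖ ≤ c`. -/
theorem stmt_0
    {X Y : Type*} [MeasurableSpace X] [StandardBorelSpace X]
    [MeasurableSpace Y] [StandardBorelSpace Y]
    (μ : Measure X) (ν : Measure Y) [SigmaFinite μ] [SigmaFinite ν]
    (τ : Measure (Y × X)) [IsFiniteMeasure τ]
    (w : Y × X → ℂ) (hw_meas : Measurable w)
    (hw_unimodular : ∀ᵐ p ∂τ, ‖w p‖ = 1)
    (c : ℝ) (hc : 0 < c)
    (hmargX : ∀ α : Set X, MeasurableSet α → τ (Set.univ ×ˢ α) ≤ ENNReal.ofReal c * μ α)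
    (hmargY : ∀ β : Set Y, MeasurableSet β → τ (β ×ˢ Set.univ) ≤ ENNReal.ofReal c * ν β) :
    (∀ (f : Lp ℂ 2 μ) (g : Lp ℂ 2 ν),
        Integrable (fun p : Y × X => f p.2 * (starRingEnd ℂ) (g p.1)) τ ∧
        ∫ p, ‖f p.2‖ * ‖g p.1‖ ∂τ ≤ c * ‖f‖ * ‖g‖) ∧
    (∃ T : Lp ℂ 2 μ →L[ℂ] Lp ℂ 2 ν,
        ‖T‖ ≤ c ∧
        (∀ (f : Lp ℂ 2 μ) (g : Lp ℂ 2 ν),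
          ∫ y, T f y * (starRingEnd ℂ) (g y) ∂ν
            = ∫ p, f p.2 * (starRingEnd ℂ) (g p.1) * w p ∂τ) ∧
        (∀ T' : Lp ℂ 2 μ →L[ℂ] Lp ℂ 2 ν,
          (∀ (f : Lp ℂ 2 μ) (g : Lp ℂ 2 ν),
            ∫ y, T' f y * (starRingEnd ℂ) (g y) ∂ν
              = ∫ p, f p.2 * (starRingEnd ℂ) (g p.1) * w p ∂τ) → T' = T)) := by
  have hX : τ.map Prod.snd ≤ ENNReal.ofReal c • μ := by
    refine Measure.le_iff.2 fun α hα => ?_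
    rw [Measure.map_apply measurable_snd hα, ← Set.univ_prod]
    simpa using hmargX α hα
  have hY : τ.map Prod.fst ≤ ENNReal.ofReal c • ν := by
    refine Measure.le_iff.2 fun β hβ => ?_
    rw [Measure.map_apply measurable_fst hβ, ← Set.prod_univ]
    simpa using hmargY β hβ
  set P := weightedPullback hc measurable_snd hX hw_meas hw_unimodular with hP
  set Q := weightedPullback hc measurable_fst hY (u := fun _ => 1) measurable_const
    (by simp) with hQ
  have hPn : ‖P‖ ≤ √c := norm_weightedPullback_le ..
  have hQn : ‖Q‖ ≤ √c := norm_weightedPullback_le ..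
  have hPf (f : Lp ℂ 2 μ) : P f =ᵐ[τ] fun p => w p * f p.2 := coeFn_weightedPullback ..
  have hQg (g : Lp ℂ 2 ν) : Q g =ᵐ[τ] fun p => 1 * g p.1 := coeFn_weightedPullback ..
  -- The integral pairing used in the statement is Mathlib's inner product with swapped arguments.
  have hinner (h k : Lp ℂ 2 ν) :
      ∫ y, h y * (starRingEnd ℂ) (k y) ∂ν = inner ℂ k h := by
    rw [L2.inner_def]
    simp only [RCLike.inner_apply]
  have hT (f : Lp ℂ 2 μ) (g : Lp ℂ 2 ν) : inner ℂ g ((Q.adjoint ∘L P) f)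
      = ∫ p, f p.2 * (starRingEnd ℂ) (g p.1) * w p ∂τ := by
    rw [ContinuousLinearMap.comp_apply, ContinuousLinearMap.adjoint_inner_right, L2.inner_def]
    refine integral_congr_ae ?_
    filter_upwards [hPf f, hQg g] with p h1 h2
    simp only [RCLike.inner_apply, h1, h2, one_mul]
    ring
  refine ⟨fun f g => ⟨?_, ?_⟩, Q.adjoint ∘L P, ?_, fun f g => ?_, fun T' hT' => ?_⟩
  · exact (memLp_comp hc measurable_snd hX (Lp.memLp f)).integrable_mul
      (memLp_comp hc measurable_fst hY (Lp.memLp g)).star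
  · calc ∫ p, ‖f p.2‖ * ‖g p.1‖ ∂τ = ∫ p, ‖P f p‖ * ‖Q g p‖ ∂τ := by
          refine integral_congr_ae ?_
          filter_upwards [hPf f, hQg g, hw_unimodular] with p h1 h2 h3
          simp [h1, h2, h3]
      _ ≤ ‖P f‖ * ‖Q g‖ := integral_norm_mul_norm_le _ _
      _ ≤ (√c * ‖f‖) * (√c * ‖g‖) :=
          mul_le_mul (P.le_of_opNorm_le hPn f) (Q.le_of_opNorm_le hQn g) (norm_nonneg _)
            (by positivity)
      _ = c * ‖f‖ * ‖g‖ := by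
          rw [mul_mul_mul_comm, Real.mul_self_sqrt hc.le, mul_assoc]
  · calc ‖Q.adjoint ∘L P‖ ≤ ‖Q.adjoint‖ * ‖P‖ := ContinuousLinearMap.opNorm_comp_le _ _
      _ ≤ √c * √c := by
          rw [LinearIsometryEquiv.norm_map]
          gcongr
      _ = c := Real.mul_self_sqrt hc.le
  · rw [hinner, hT]
  · ext1 f
    refine ext_inner_left ℂ fun g => ?_
    rw [← hinner, hT' f g, hT]
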